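/- Neumann boundary value problem: Let f : Σ_N^+ → ℝ be continuous and let ξ : V_0 → ℝ satisfy ξ(p) = ∫_{[p_1]} f dμ for every constant sequence p = (ṗ_1) ∈ V_0. Then there exists u ∈ D_0 such that Δu = f and the Neumann derivative satisfies (du)(p) = ξ(p) for every p ∈ V_0. -/

import Mathlib

open Filter Topology MeasureTheory Finset Classical

noncomputable section

/-- The one-sided full shift space `Σ_N^+` on `N` symbols; coordinates are indexed
from `0`, so the paper's `x_1 x_2 ⋯` is `x 0, x 1, ⋯` here. It carries the product
of the discrete topology on `Fin N`. -/
abbrev SSp (N : ℕ) : Type := ℕ → Fin N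

/-- The level-`m` vertex set `V_m = {p : p_i = p_{i+1} for all i ≥ m+1}` (1-based),
i.e. the sequences that are constant from (0-based) coordinate `m` on.  It is
realized as a `Finset` via the parametrization by the first `m+1` coordinates;
see `mem_V` for the defining property. -/
noncomputable def V (N m : ℕ) : Finset (SSp N) :=
  (Finset.univ : Finset (Fin (m + 1) → Fin N)).image
    (fun w j => w ⟨min j m, by omega⟩)

lemma const_from (N m : ℕ) (p : SSp N) (h : ∀ i, m ≤ i → p i = p (i + 1)) :
    ∀ j, m ≤ j → p j = p m := by
  intro j hj
  induction j with
  | zero => have : m = 0 := by omega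
            simp [this]
  | succ k ih =>
      rcases Nat.lt_or_ge k m with hk | hk
      · have : m = k + 1 := by omega
        simp [this]
      · rw [← h k hk]
        exact ih hk

/-- Membership in `V N m` is exactly the paper's condition
`p_i = p_{i+1}` for all `i ≥ m+1` (1-based), i.e. `p i = p (i+1)` for all `i ≥ m`. -/
lemma mem_V {N m : ℕ} {p : SSp N} :
    p ∈ V N m ↔ ∀ i, m ≤ i → p i = p (i + 1) := by
  classical
  constructor
  · intro hp i hi
    simp only [V, Finset.mem_image] at hp
    obtain ⟨w, -, rfl⟩ := hp
    have h1 : min i m = m := by omega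
    have h2 : min (i + 1) m = m := by omega
    simp [h1, h2]
  · intro h
    simp only [V, Finset.mem_image]
    refine ⟨fun j => p j, Finset.mem_univ _, ?_⟩
    funext j
    rcases Nat.lt_or_ge j m with hj | hj
    · have : min j m = j := by omega
      simp [this]
    · have : min j m = m := by omega
      simp only [this]
      exact (const_from N m p h j hj).symm

/-- The deleted neighbourhood `U_{p,m} = {q ∈ V_m : q ≠ p, q_i = p_i for 1 ≤ i ≤ m}`
(1-based), i.e. `q` agrees with `p` on the first `m` (0-based: `i < m`) coordinates. -/
noncomputable def U (N m : ℕ) (p : SSp N) : Finset (SSp N) :=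
  (V N m).filter (fun q => q ≠ p ∧ ∀ i, i < m → q i = p i)

/-- `κ_p = min {j : p ∈ V_j}`. -/
noncomputable def kappa (N : ℕ) (p : SSp N) : ℕ := sInf {j | p ∈ V N j}

/-- The difference operator
`H_m u (p) = Σ_{i = κ_p}^{m} Σ_{q ∈ U_{p,i}} (u(q) − u(p))`. -/
noncomputable def H (N m : ℕ) (u : SSp N → ℝ) (p : SSp N) : ℝ :=
  ∑ i ∈ Finset.Icc (kappa N p) m, ∑ q ∈ U N i p, (u q - u p)

/-- The Dirichlet form `E_{H_m}(u, v) = − Σ_{p ∈ V_m} u(p) · H_m v(p)`. -/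
noncomputable def EH (N m : ℕ) (u v : SSp N → ℝ) : ℝ :=
  -∑ p ∈ V N m, u p * H N m v p

/-- The cylinder set `[p_1 ⋯ p_m]`, determined by the first `m` coordinates of `p`. -/
def cyl (N m : ℕ) (p : SSp N) : Set (SSp N) := {x | ∀ i, i < m → x i = p i}

/-- `χ_p^m` : the indicator function of the cylinder set `[p_1 ⋯ p_{m+1}]`. -/
noncomputable def chi (N m : ℕ) (p : SSp N) : SSp N → ℝ :=
  (cyl N (m + 1) p).indicator 1

/-- `u ∈ dom E`: `u` is continuous and the energy
`E(u) = lim_m E_{H_m}(u|_{V_m})` exists (and is finite). -/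
def MemDomE (N : ℕ) (u : SSp N → ℝ) : Prop :=
  Continuous u ∧ ∃ L : ℝ, Tendsto (fun m => EH N m u u) atTop (nhds L)

/-- `v ∈ dom_M E`: `v` has finite energy and vanishes on the boundary `V_M`. -/
def MemDomME (N M : ℕ) (v : SSp N → ℝ) : Prop :=
  MemDomE N v ∧ ∀ p ∈ V N M, v p = 0

/-- `u ∈ 𝒟_M` with `Δ u = f` (strong formulation with boundary `V_M`):
`u` and `f` are continuous and
`lim_{m → ∞} max_{p ∈ V_m ∖ V_M} |N^{m+1} H_m u(p) − f(p)| = 0`. -/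
def IsLaplacianOn (N M : ℕ) (u f : SSp N → ℝ) : Prop :=
  Continuous u ∧ Continuous f ∧
    ∀ ε : ℝ, 0 < ε → ∃ m₀ : ℕ, ∀ m, m₀ ≤ m → ∀ p ∈ V N m, p ∉ V N M →
      |(N : ℝ) ^ (m + 1) * H N m u p - f p| < ε

/-- `u ∈ D_μ` with `Δ u = f` (original definition of the Laplacian):
`u` and `f` are continuous and
`lim_{m → ∞} max_{p ∈ V_m ∖ V_{m−1}} |N^{m+1} H_m u(p) − f(p)| = 0`
(the level is written `m+1` to avoid natural subtraction). -/
def IsLaplacianDmu (N : ℕ) (u f : SSp N → ℝ) : Prop :=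
  Continuous u ∧ Continuous f ∧
    ∀ ε : ℝ, 0 < ε → ∃ m₀ : ℕ, ∀ m, m₀ ≤ m → ∀ p ∈ V N (m + 1), p ∉ V N m →
      |(N : ℝ) ^ (m + 2) * H N (m + 1) u p - f p| < ε

/-- `μ` is the equidistributed Bernoulli measure:
`μ([p_1 ⋯ p_m]) = N^{−m}` for every cylinder set. -/
def IsBernoulli (N : ℕ) (μ : Measure (SSp N)) : Prop :=
  ∀ (m : ℕ) (p : SSp N), μ (cyl N m p) = (N : ENNReal)⁻¹ ^ m

/-- `ρ(x,y) = min {i : x_i ≠ y_i}` (1-based; `0`-based first disagreement plus one). -/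
noncomputable def rho (N : ℕ) (x y : SSp N) : ℕ := sInf {i | x i ≠ y i} + 1

/-- The matrix `(G_m)_{pq}`: `2/N` if `q = p`, `1/N` if `q ∈ U_{p,m}`, `0` otherwise. -/
noncomputable def Gmat (N m : ℕ) (p q : SSp N) : ℝ :=
  if q = p then 2 / N else if q ∈ U N m p then 1 / N else 0

/-- The Green's function
`g(x,y) = Σ_{m=1}^{ρ(x,y)−1} Σ_{r,s ∈ V_m ∖ V_{m−1}} (G_m)_{rs} χ_r^m(x) χ_s^m(y)`
for `ρ(x,y) > 1`, and `g(x,y) = 0` for `ρ(x,y) = 1` (the sum is then empty). -/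
noncomputable def greenFn (N : ℕ) (x y : SSp N) : ℝ :=
  ∑ m ∈ Finset.Icc 1 (rho N x y - 1),
    ∑ r ∈ (V N m).filter (fun r => r ∉ V N (m - 1)),
      ∑ s ∈ (V N m).filter (fun s => s ∉ V N (m - 1)),
        Gmat N m r s * chi N m r x * chi N m s y

/-- The Green's operator `G_μ f (x) = ∫_{Σ_N^+ ∖ {x}} g(x,y) f(y) dμ(y)`. -/
noncomputable def Gop (N : ℕ) (μ : Measure (SSp N)) (f : SSp N → ℝ) (x : SSp N) : ℝ :=
  ∫ y in ({x}ᶜ : Set (SSp N)), greenFn N x y * f y ∂μ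


/-- The sequence that agrees with `p` before coordinate `i` and equals `c` from `i` on. -/
def stem {N : ℕ} (i : ℕ) (p : SSp N) (c : Fin N) : SSp N := fun j => if j < i then p j else c

lemma stem_of_lt {N i j : ℕ} (p : SSp N) (c : Fin N) (h : j < i) : stem i p c j = p j :=
  if_pos h

lemma stem_of_le {N i j : ℕ} (p : SSp N) (c : Fin N) (h : i ≤ j) : stem i p c j = c :=
  if_neg (by omega)

lemma stem_mem_V {N : ℕ} (i : ℕ) (p : SSp N) (c : Fin N) : stem i p c ∈ V N i :=
  mem_V.2 fun j hj => by rw [stem_of_le p c hj, stem_of_le p c (by omega)]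

lemma stem_injective {N : ℕ} (i : ℕ) (p : SSp N) : Function.Injective (stem i p) := fun c d h => by
  simpa [stem] using congrFun h i

/-- A point of `V N i` sharing its first `i` coordinates with `p` is a `stem`. -/
lemma eq_stem {N i : ℕ} {p q : SSp N} (hq : q ∈ V N i) (h : ∀ j, j < i → q j = p j) :
    q = stem i p (q i) := by
  funext j
  rcases lt_or_ge j i with hj | hj
  · rw [stem_of_lt _ _ hj, h j hj]
  · rw [stem_of_le _ _ hj, const_from N i q (mem_V.1 hq) j hj]

lemma V_mono {N i j : ℕ} (h : i ≤ j) : V N i ⊆ V N j := fun _ hp =>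
  mem_V.2 fun k hk => mem_V.1 hp k (h.trans hk)

/-- Over `{p} ∪ U_{p,i}`, sums of differences run over all symbols at coordinate `i`. -/
lemma sum_U_sub {N i : ℕ} {p : SSp N} (hp : p ∈ V N i) (u : SSp N → ℝ) :
    ∑ q ∈ U N i p, (u q - u p) = ∑ c, (u (stem i p c) - u p) := by
  have hU : insert p (U N i p) = Finset.univ.image (stem i p) := by
    ext q
    simp only [U, Finset.mem_insert, Finset.mem_filter, Finset.mem_image, Finset.mem_univ,
      true_and]
    constructor
    · rintro (rfl | ⟨hq, -, h⟩)
      · exact ⟨q i, (eq_stem hp fun _ _ => rfl).symm⟩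
      · exact ⟨q i, (eq_stem hq h).symm⟩
    · rintro ⟨c, rfl⟩
      by_cases hc : stem i p c = p
      · exact Or.inl hc
      · exact Or.inr ⟨stem_mem_V i p c, hc, fun j hj => stem_of_lt p c hj⟩
  rw [← Finset.sum_image (f := fun q => u q - u p) (fun c _ d _ h => stem_injective i p h), ← hU,
    Finset.sum_insert (by simp [U])]
  simp

lemma kappa_le {N m : ℕ} {p : SSp N} (hp : p ∈ V N m) : kappa N p ≤ m := Nat.sInf_le hp

lemma mem_V_kappa {N m : ℕ} {p : SSp N} (hp : p ∈ V N m) : p ∈ V N (kappa N p) :=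
  Nat.sInf_mem (s := {j | p ∈ V N j}) ⟨m, hp⟩

/-- The jump at coordinate `k + 1` of the solution with prescribed cylinder masses `F`. -/
def jump {N : ℕ} (F : ℕ → SSp N → ℝ) (k : ℕ) (x : SSp N) : ℝ :=
  if x (k + 1) = x k then 0
  else -(F (k + 2) x + F (k + 1) x - F (k + 2) (stem (k + 1) x (x k))) / N

/-- The sum of all jumps: it vanishes on `V N 0`, and the differences `H N m` of it recover `F`. -/
def potential {N : ℕ} (F : ℕ → SSp N → ℝ) (x : SSp N) : ℝ := ∑' k, jump F k x

section Combinatorial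

variable {N : ℕ} {F : ℕ → SSp N → ℝ}

lemma jump_eq_zero {k : ℕ} {x : SSp N} (hx : x ∈ V N k) : jump F k x = 0 :=
  if_pos (mem_V.1 hx k le_rfl).symm

lemma jump_congr (hloc : ∀ m x y, (∀ i, i < m → x i = y i) → F m x = F m y) {k : ℕ} {x y : SSp N}
    (h : ∀ i, i < k + 2 → x i = y i) : jump F k x = jump F k y := by
  have hs : F (k + 2) (stem (k + 1) x (x k)) = F (k + 2) (stem (k + 1) y (y k)) := by
    refine hloc _ _ _ fun i hi => ?_
    simp only [stem]
    split_ifs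
    · exact h i hi
    · exact h k (by omega)
  unfold jump
  rw [hs, h k (by omega), h (k + 1) (by omega), hloc (k + 2) x y h,
    hloc (k + 1) x y fun i hi => h i (by omega)]

lemma potential_eq_sum {m : ℕ} {x : SSp N} (hx : x ∈ V N m) :
    potential F x = ∑ k ∈ Finset.range m, jump F k x :=
  tsum_eq_sum fun k hk => jump_eq_zero (V_mono (by simpa using hk) hx)

lemma potential_stem_sub (hloc : ∀ m x y, (∀ i, i < m → x i = y i) → F m x = F m y) {k : ℕ}
    {p : SSp N} (hp : p ∈ V N (k + 1)) (c : Fin N) :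
    potential F (stem (k + 1) p c) - potential F p
      = jump F k (stem (k + 1) p c) - jump F k p := by
  have hsum : ∑ j ∈ Finset.range k, jump F j (stem (k + 1) p c)
      = ∑ j ∈ Finset.range k, jump F j p := by
    refine Finset.sum_congr rfl fun j hj => jump_congr hloc fun i hi => stem_of_lt p c ?_
    have := Finset.mem_range.1 hj
    omega
  rw [potential_eq_sum hp, potential_eq_sum (stem_mem_V (k + 1) p c), Finset.sum_range_succ,
    Finset.sum_range_succ, hsum]
  ring

lemma sum_jump_stem (hN : N ≠ 0) (hloc : ∀ m x y, (∀ i, i < m → x i = y i) → F m x = F m y)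
    (hadd : ∀ i p, F i p = ∑ c, F (i + 1) (stem i p c)) (k : ℕ) (p : SSp N) :
    ∑ c, jump F k (stem (k + 1) p c)
      = F (k + 2) (stem (k + 1) p (p k)) - F (k + 1) p := by
  set t := F (k + 2) (stem (k + 1) p (p k)) with ht
  have hterm : ∀ c, jump F k (stem (k + 1) p c)
      = -(F (k + 2) (stem (k + 1) p c) + F (k + 1) p - t) / N
        + if c = p k then F (k + 1) p / N else 0 := by
    intro c
    have h1 : stem (k + 1) p c (k + 1) = c := stem_of_le p c le_rfl
    have h2 : stem (k + 1) p c k = p k := stem_of_lt p c (by omega)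
    have h3 : stem (k + 1) (stem (k + 1) p c) (p k) = stem (k + 1) p (p k) := by
      funext j
      simp only [stem]
      split_ifs <;> rfl
    have h4 : F (k + 1) (stem (k + 1) p c) = F (k + 1) p :=
      hloc _ _ _ fun i hi => stem_of_lt p c hi
    unfold jump
    rw [h1, h2, h3, h4, ← ht]
    split_ifs with hc
    · rw [hc, ← ht]
      ring
    · ring
  have hN' : (N : ℝ) ≠ 0 := by exact_mod_cast hN
  rw [Finset.sum_congr rfl fun c _ => hterm c, Finset.sum_add_distrib, ← Finset.sum_div,
    Finset.sum_neg_distrib, Finset.sum_sub_distrib, Finset.sum_add_distrib, ← hadd (k + 1) p]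
  simp
  field_simp
  ring

/-- The level-`k+1` part of `H` on the potential. -/
lemma sum_U_potential (hN : N ≠ 0) (hloc : ∀ m x y, (∀ i, i < m → x i = y i) → F m x = F m y)
    (hadd : ∀ i p, F i p = ∑ c, F (i + 1) (stem i p c)) {k : ℕ} {p : SSp N}
    (hp : p ∈ V N (k + 1)) :
    ∑ q ∈ U N (k + 1) p, (potential F q - potential F p)
      = F (k + 2) p - if p ∈ V N k then F (k + 1) p else 0 := by
  rw [sum_U_sub hp, Finset.sum_congr rfl fun c _ => potential_stem_sub hloc hp c,
    Finset.sum_sub_distrib, sum_jump_stem hN hloc hadd]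
  have hN' : (N : ℝ) ≠ 0 := by exact_mod_cast hN
  split_ifs with h
  · have hpk : stem (k + 1) p (p k) = p := by
      rw [mem_V.1 h k le_rfl]
      exact (eq_stem hp fun _ _ => rfl).symm
    simp [jump_eq_zero h, hpk]
  · have hne : p (k + 1) ≠ p k := fun he => h <| mem_V.2 fun i hi => by
      rcases hi.eq_or_lt with rfl | hi
      · exact he.symm
      · exact mem_V.1 hp i hi
    simp only [jump, if_neg hne, Finset.sum_const, Finset.card_univ, Fintype.card_fin, nsmul_eq_mul]
    field_simp
    ring

lemma H_succ {m : ℕ} {p : SSp N} (u : SSp N → ℝ) (h : kappa N p ≤ m + 1) :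
    H N (m + 1) u p = H N m u p + ∑ q ∈ U N (m + 1) p, (u q - u p) :=
  Finset.sum_Icc_succ_top h _

lemma H_of_lt_kappa {m : ℕ} {p : SSp N} (u : SSp N → ℝ) (h : m < kappa N p) : H N m u p = 0 := by
  rw [H, Finset.Icc_eq_empty (by omega), Finset.sum_empty]

lemma H_zero_potential {p : SSp N} (hp : p ∈ V N 0) : H N 0 (potential F) p = 0 := by
  refine Finset.sum_eq_zero fun i hi => Finset.sum_eq_zero fun q hq => ?_
  obtain rfl : i = 0 := by simpa using (Finset.mem_Icc.1 hi).2
  rw [potential_eq_sum hp, potential_eq_sum (Finset.mem_filter.1 hq).1]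
  simp

lemma H_potential_boundary (hN : N ≠ 0)
    (hloc : ∀ m x y, (∀ i, i < m → x i = y i) → F m x = F m y)
    (hadd : ∀ i p, F i p = ∑ c, F (i + 1) (stem i p c)) {p : SSp N} (hp : p ∈ V N 0) (m : ℕ) :
    H N m (potential F) p = F (m + 1) p - F 1 p := by
  induction m with
  | zero => simp [H_zero_potential hp]
  | succ m ih =>
    have hk := kappa_le hp
    rw [H_succ _ (by omega), ih, sum_U_potential hN hloc hadd (V_mono (by omega) hp),
      if_pos (V_mono (by omega) hp)]
    ring

lemma H_potential_interior (hN : N ≠ 0)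
    (hloc : ∀ m x y, (∀ i, i < m → x i = y i) → F m x = F m y)
    (hadd : ∀ i p, F i p = ∑ c, F (i + 1) (stem i p c)) {m : ℕ} {p : SSp N} (hp : p ∈ V N m)
    (hp0 : p ∉ V N 0) : H N m (potential F) p = F (m + 1) p := by
  induction m with
  | zero => exact absurd hp hp0
  | succ m ih =>
    rw [H_succ _ (kappa_le hp), sum_U_potential hN hloc hadd hp]
    split_ifs with h
    · rw [ih h]
      ring
    · have hlt : m < kappa N p := by
        by_contra! hle
        exact h (V_mono hle (mem_V_kappa hp))
      rw [H_of_lt_kappa _ hlt]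
      ring

end Combinatorial

lemma isOpen_cyl (N m : ℕ) (p : SSp N) : IsOpen (cyl N m p) :=
  PiNat.isOpen_cylinder (fun _ => Fin N) p m

lemma continuous_of_locally_determined {N m : ℕ} {g : SSp N → ℝ}
    (h : ∀ x y, (∀ i, i < m → x i = y i) → g x = g y) : Continuous g := by
  refine continuous_iff_continuousAt.2 fun x => (continuousAt_const (y := g x)).congr ?_
  filter_upwards [(isOpen_cyl N m x).mem_nhds fun i _ => rfl] with y hy
  exact (h y x hy).symm

/-- The potential is continuous when the masses decay geometrically. -/
lemma continuous_potential {N : ℕ} {F : ℕ → SSp N → ℝ} (hN : 2 ≤ N)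
    (hloc : ∀ m x y, (∀ i, i < m → x i = y i) → F m x = F m y) {C : ℝ} (hC : 0 ≤ C)
    (hF : ∀ m x, |F m x| ≤ C * ((N : ℝ)⁻¹) ^ m) : Continuous (potential F) := by
  have hN1 : (1 : ℝ) ≤ N := by exact_mod_cast (by omega : 1 ≤ N)
  have hr0 : (0 : ℝ) ≤ (N : ℝ)⁻¹ := by positivity
  have hr1 : (N : ℝ)⁻¹ < 1 := inv_lt_one_of_one_lt₀ (by exact_mod_cast (by omega : 1 < N))
  have hdecay : ∀ m k, k ≤ m → ∀ x, |F m x| ≤ C * ((N : ℝ)⁻¹) ^ k := fun m k hk x =>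
    (hF m x).trans (mul_le_mul_of_nonneg_left (pow_le_pow_of_le_one hr0 hr1.le hk) hC)
  refine continuous_tsum (u := fun k => 3 * C * ((N : ℝ)⁻¹) ^ k)
    (fun k => continuous_of_locally_determined (m := k + 2) fun x y h => jump_congr hloc h)
    ((summable_geometric_of_lt_one hr0 hr1).mul_left _) fun k x => ?_
  have hpos : 0 ≤ 3 * C * ((N : ℝ)⁻¹) ^ k := by positivity
  unfold jump
  split_ifs
  · simpa using hpos
  · rw [Real.norm_eq_abs, abs_div, abs_neg, Nat.abs_cast]
    refine (div_le_self (abs_nonneg _) hN1).trans ?_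
    have h1 := abs_le.1 (hdecay (k + 2) k (by omega) x)
    have h2 := abs_le.1 (hdecay (k + 1) k (by omega) x)
    have h3 := abs_le.1 (hdecay (k + 2) k (by omega) (stem (k + 1) x (x k)))
    rw [abs_le]
    constructor <;> linarith [h1.1, h1.2, h2.1, h2.2, h3.1, h3.2]

/-- Continuous functions on the shift space vary uniformly little on long cylinders. -/
lemma exists_cyl_oscillation_lt {N : ℕ} {f : SSp N → ℝ} (hf : Continuous f) {ε : ℝ} (hε : 0 < ε) :
    ∃ m₀, ∀ m, m₀ ≤ m → ∀ p, ∀ x ∈ cyl N m p, |f x - f p| < ε := by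
  let _ : MetricSpace (SSp N) := PiNat.metricSpace (E := fun _ => Fin N)
  obtain ⟨δ, hδ, h⟩ :=
    Metric.uniformContinuous_iff.1 (CompactSpace.uniformContinuous_of_continuous hf) ε hε
  obtain ⟨m₀, hm₀⟩ := exists_pow_lt_of_lt_one hδ (by norm_num : (1 / 2 : ℝ) < 1)
  refine ⟨m₀, fun m hm p x hx => h ?_⟩
  refine lt_of_le_of_lt (PiNat.mem_cylinder_iff_dist_le.1 ?_) hm₀
  exact fun i hi => hx i (by omega)

section Bernoulli

variable {N : ℕ} {μ : Measure (SSp N)} {f : SSp N → ℝ}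

lemma IsBernoulli.real_cyl (hμ : IsBernoulli N μ) (m : ℕ) (p : SSp N) :
    μ.real (cyl N m p) = ((N : ℝ)⁻¹) ^ m := by
  simp [Measure.real, hμ m p]

lemma setIntegral_cyl_congr {m : ℕ} {x y : SSp N} (h : ∀ i, i < m → x i = y i) :
    ∫ z in cyl N m x, f z ∂μ = ∫ z in cyl N m y, f z ∂μ := by
  have : cyl N m x = cyl N m y := by
    ext z
    exact forall₂_congr fun i hi => by rw [h i hi]
  rw [this]

lemma setIntegral_cyl_eq_sum (hf : Integrable f μ) (i : ℕ) (p : SSp N) :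
    ∫ z in cyl N i p, f z ∂μ = ∑ c, ∫ z in cyl N (i + 1) (stem i p c), f z ∂μ := by
  have hU : cyl N i p = ⋃ c, cyl N (i + 1) (stem i p c) := by
    ext z
    simp only [Set.mem_iUnion]
    constructor
    · intro hz
      refine ⟨z i, fun j hj => ?_⟩
      rcases (Nat.lt_succ_iff.1 hj).eq_or_lt with rfl | hj
      · rw [stem_of_le _ _ le_rfl]
      · rw [stem_of_lt _ _ hj, hz j hj]
    · rintro ⟨c, hc⟩ j hj
      rw [hc j (by omega), stem_of_lt _ _ hj]
  rw [hU, integral_iUnion_fintype (fun c => (isOpen_cyl N _ _).measurableSet) ?_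
    fun c => hf.integrableOn]
  intro c d hcd
  refine Set.disjoint_left.2 fun z hc hd => hcd ?_
  have h1 := hc i (by omega)
  have h2 := hd i (by omega)
  rw [stem_of_le _ _ le_rfl] at h1 h2
  rw [← h1, h2]

lemma abs_setIntegral_cyl_le [IsFiniteMeasure μ] (hμ : IsBernoulli N μ) {m : ℕ} {p : SSp N} {C : ℝ}
    (hC : ∀ x ∈ cyl N m p, |f x| ≤ C) :
    |∫ x in cyl N m p, f x ∂μ| ≤ C * ((N : ℝ)⁻¹) ^ m := by
  rw [← hμ.real_cyl m p]
  exact norm_setIntegral_le_of_norm_le_const (f := f) (measure_lt_top μ _) hC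

/-- Cylinder averages of `f` are close to `f` when `f` oscillates little on the cylinder. -/
lemma abs_average_cyl_sub_le [IsFiniteMeasure μ] (hN : N ≠ 0) (hμ : IsBernoulli N μ)
    (hf : Integrable f μ) {m : ℕ} {p : SSp N} {C : ℝ} (hC : ∀ x ∈ cyl N m p, |f x - f p| ≤ C) :
    |(N : ℝ) ^ m * (∫ x in cyl N m p, f x ∂μ) - f p| ≤ C := by
  have hpos : (0 : ℝ) < (N : ℝ) ^ m := by
    have : (0 : ℝ) < N := by exact_mod_cast Nat.pos_of_ne_zero hN
    positivity
  have h := abs_setIntegral_cyl_le hμ hC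
  rw [integral_sub hf.integrableOn (integrable_const _), setIntegral_const, hμ.real_cyl,
    smul_eq_mul, inv_pow] at h
  have heq : (N : ℝ) ^ m * (∫ x in cyl N m p, f x ∂μ) - f p
      = (N : ℝ) ^ m * ((∫ x in cyl N m p, f x ∂μ) - ((N : ℝ) ^ m)⁻¹ * f p) := by
    field_simp
  rw [heq, abs_mul, abs_of_pos hpos]
  calc _ ≤ (N : ℝ) ^ m * (C * ((N : ℝ) ^ m)⁻¹) := mul_le_mul_of_nonneg_left h hpos.le
    _ = C := by field_simp

end Bernoulli

/-- Neumann boundary value problem: if `f` is continuous and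
`ξ : V_0 → ℝ` satisfies `ξ(p) = ∫_{[p_1]} f dμ` for every `p ∈ V_0`, then there is
`u ∈ 𝒟_0` with `Δu = f` and Neumann derivative `(du)(p) = ξ(p)` for all `p ∈ V_0`. -/
theorem statement19 (N : ℕ) (hN : 2 ≤ N)
    (μ : Measure (SSp N)) [IsProbabilityMeasure μ] (hμ : IsBernoulli N μ)
    (f : SSp N → ℝ) (hf : Continuous f) (ξ : SSp N → ℝ)
    (hξ : ∀ p ∈ V N 0, ξ p = ∫ x in cyl N 1 p, f x ∂μ) :
    ∃ u : SSp N → ℝ, IsLaplacianOn N 0 u f ∧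
      ∀ p ∈ V N 0, Tendsto (fun m => -(H N m u p)) atTop (nhds (ξ p)) := by
  have hN0 : N ≠ 0 := by omega
  have hfint : Integrable f μ :=
    integrableOn_univ.1 (hf.continuousOn.integrableOn_compact isCompact_univ)
  obtain ⟨C, hC⟩ := isCompact_univ.exists_bound_of_continuousOn hf.continuousOn
  have hfC : ∀ x, |f x| ≤ |C| := fun x => (hC x (Set.mem_univ x)).trans (le_abs_self C)
  set F : ℕ → SSp N → ℝ := fun m p => ∫ x in cyl N m p, f x ∂μ with hFdef
  have hloc : ∀ m x y, (∀ i, i < m → x i = y i) → F m x = F m y := fun m x y h =>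
    setIntegral_cyl_congr h
  have hadd : ∀ i p, F i p = ∑ c, F (i + 1) (stem i p c) := setIntegral_cyl_eq_sum hfint
  have hF : ∀ m x, |F m x| ≤ |C| * ((N : ℝ)⁻¹) ^ m := fun m x =>
    abs_setIntegral_cyl_le hμ fun y _ => hfC y
  refine ⟨potential F, ⟨continuous_potential hN hloc (abs_nonneg C) hF, hf, ?_⟩, ?_⟩
  · intro ε hε
    obtain ⟨m₀, hm₀⟩ := exists_cyl_oscillation_lt hf (half_pos hε)
    refine ⟨m₀, fun m hm p hp hp0 => ?_⟩
    rw [H_potential_interior hN0 hloc hadd hp hp0]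
    refine (abs_average_cyl_sub_le hN0 hμ hfint fun x hx => ?_).trans_lt (half_lt_self hε)
    exact (hm₀ (m + 1) (by omega) p x hx).le
  · intro p hp
    have hr1 : (N : ℝ)⁻¹ < 1 := inv_lt_one_of_one_lt₀ (by exact_mod_cast (by omega : 1 < N))
    have hlim : Tendsto (fun m => F m p) atTop (nhds 0) := by
      refine squeeze_zero_norm (fun m => hF m p) ?_
      simpa using (tendsto_pow_atTop_nhds_zero_of_lt_one (by positivity) hr1).const_mul |C|
    have hlim' := (tendsto_const_nhds (x := F 1 p)).sub (hlim.comp (tendsto_add_atTop_nat 1))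
    rw [sub_zero] at hlim'
    rw [hξ p hp]
    refine hlim'.congr fun m => ?_
    rw [H_potential_boundary hN0 hloc hadd hp m]
    simp
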